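/- Let m, n be positive integers and p_1, ..., p_m ∈ [2, ∞]. Then every unimodular m-linear form A : ℓ_{p_1}^n × ⋯ × ℓ_{p_m}^n → 𝕂 (i.e., every m-linear form all of whose coefficients A(e_{j_1},...,e_{j_m}) have modulus 1) satisfies ‖A‖ ≥ (1/√2)^{m−1} · n^{1/2 + (1/2 − 1/p_1) + ⋯ + (1/2 − 1/p_m)} (with the convention 1/∞ = 0). -/

import Mathlib

open scoped BigOperators ENNReal

noncomputable section

/-- The `ℓ_p` norm on `𝕂^n`, for `p ∈ [1, ∞]` (sup norm when `p = ∞`). -/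
def lpNorm {𝕂 : Type*} [RCLike 𝕂] (p : ℝ≥0∞) {n : ℕ} (x : Fin n → 𝕂) : ℝ :=
  if p = ∞ then ⨆ j, ‖x j‖ else (∑ j, ‖x j‖ ^ p.toReal) ^ (1 / p.toReal)

/-- The operator norm of an `m`-linear form `A : ℓ_{p 1}^{n 1} × ⋯ × ℓ_{p m}^{n m} → 𝕂`,
i.e. the supremum of `‖A x‖` over all `x` with `‖x k‖_{p k} ≤ 1` for every `k`. -/
def opNorm {𝕂 : Type*} [RCLike 𝕂] {m : ℕ} {n : Fin m → ℕ} (p : Fin m → ℝ≥0∞)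
    (A : MultilinearMap 𝕂 (fun k => Fin (n k) → 𝕂) 𝕂) : ℝ :=
  sSup {t | ∃ x : ∀ k, Fin (n k) → 𝕂, (∀ k, lpNorm (p k) (x k) ≤ 1) ∧ t = ‖A x‖}

/-- A multilinear form is unimodular if all its coefficients `A (e_{j 1}, …, e_{j m})`
have modulus 1. -/
def Unimodular {𝕂 : Type*} [RCLike 𝕂] {m : ℕ} {n : Fin m → ℕ}
    (A : MultilinearMap 𝕂 (fun k => Fin (n k) → 𝕂) 𝕂) : Prop :=
  ∀ j : ∀ k, Fin (n k), ‖A (fun k => Pi.single (j k) 1)‖ = 1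

/-- The `m`-linear form `z ↦ ∑_j c j • z^{(1)}_{j 1} ⋯ z^{(m)}_{j m}` determined by the
coefficients `c`. -/
def coeffForm {𝕂 : Type*} [RCLike 𝕂] {m : ℕ} {n : Fin m → ℕ} (c : (∀ k, Fin (n k)) → 𝕂) :
    MultilinearMap 𝕂 (fun k => Fin (n k) → 𝕂) 𝕂 :=
  ∑ j : ∀ k, Fin (n k), (MultilinearMap.mkPiRing 𝕂 (Fin m) (c j)).compLinearMap
    fun k => LinearMap.proj (j k)

/-- The conjugate exponent `p*` of `p ∈ [1,∞]`, defined by `1/p + 1/p* = 1`. -/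
def conjExp (p : ℝ≥0∞) : ℝ≥0∞ := (1 - 1/p)⁻¹

/-- Sign of a Boolean. -/
def sg (b : Bool) : ℝ := if b then 1 else -1

/-- Expectation over the cube. -/
def EE {n : ℕ} (f : (Fin n → Bool) → ℝ) : ℝ := (∑ x, f x) / 2 ^ n

/-- Flip of one coordinate. -/
def flp {n : ℕ} (i : Fin n) (x : Fin n → Bool) : Fin n → Bool := Function.update x i (!(x i))

lemma sum_cube_succ {n : ℕ} {M : Type*} [AddCommMonoid M] (f : (Fin (n+1) → Bool) → M) :
    ∑ x, f x = ∑ x : Fin n → Bool, f (Fin.cons true x) + ∑ x : Fin n → Bool, f (Fin.cons false x) := by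
  rw [← (Fin.consEquiv (fun _ : Fin (n+1) => Bool)).sum_comp, Fintype.sum_prod_type]
  simp [Fin.consEquiv]

lemma EE_succ {n : ℕ} (f : (Fin (n+1) → Bool) → ℝ) :
    EE f = (EE (fun x => f (Fin.cons true x)) + EE (fun x => f (Fin.cons false x))) / 2 := by
  unfold EE
  rw [sum_cube_succ, pow_succ]
  field_simp

lemma EE_add {n : ℕ} (f g : (Fin n → Bool) → ℝ) : EE (fun x => f x + g x) = EE f + EE g := by
  simp [EE, Finset.sum_add_distrib, add_div]

lemma EE_sub {n : ℕ} (f g : (Fin n → Bool) → ℝ) : EE (fun x => f x - g x) = EE f - EE g := by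
  simp [EE, Finset.sum_sub_distrib, sub_div]

lemma EE_mul {n : ℕ} (c : ℝ) (f : (Fin n → Bool) → ℝ) : EE (fun x => c * f x) = c * EE f := by
  simp [EE, ← Finset.mul_sum, mul_div_assoc]

lemma EE_sum {n : ℕ} {ι : Type*} (s : Finset ι) (f : ι → (Fin n → Bool) → ℝ) :
    EE (fun x => ∑ i ∈ s, f i x) = ∑ i ∈ s, EE (f i) := by
  simp only [EE]; rw [Finset.sum_comm, Finset.sum_div]

lemma EE_mono {n : ℕ} (f g : (Fin n → Bool) → ℝ) (h : ∀ x, f x ≤ g x) : EE f ≤ EE g := by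
  unfold EE; gcongr; exact h _

lemma EE_const {n : ℕ} (c : ℝ) : EE (fun _ : Fin n → Bool => c) = c := by
  simp [EE]

lemma EE_jensen {n : ℕ} (f : (Fin n → Bool) → ℝ) : (EE f) ^ 2 ≤ EE (fun x => f x ^ 2) := by
  have h : 0 ≤ EE (fun x => (f x - EE f) ^ 2) := by
    rw [← EE_const (n := n) 0]; exact EE_mono _ _ fun x => sq_nonneg _
  have h2 : EE (fun x => (f x - EE f) ^ 2) = EE (fun x => f x ^ 2) - (EE f)^2 := by
    have : (fun x => (f x - EE f) ^ 2) = fun x => (f x ^ 2 - (2 * EE f) * f x) + (EE f)^2 := by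
      funext x; ring
    rw [this, EE_add, EE_sub, EE_mul, EE_const]; ring
  linarith

/-- Dirichlet form. -/
def DD {n : ℕ} (f : (Fin n → Bool) → ℝ) : ℝ := ∑ i, EE (fun x => (f x - f (flp i x)) ^ 2)

lemma flp_zero {n : ℕ} (b : Bool) (x : Fin n → Bool) :
    flp 0 (Fin.cons b x : Fin (n+1) → Bool) = Fin.cons (!b) x := by
  simp [flp]

lemma flp_succ {n : ℕ} (b : Bool) (x : Fin n → Bool) (i : Fin n) :
    flp i.succ (Fin.cons b x : Fin (n+1) → Bool) = Fin.cons b (flp i x) := by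
  simp [flp, Fin.cons_update]

lemma DD_succ {n : ℕ} (f : (Fin (n+1) → Bool) → ℝ) :
    DD f = EE (fun x => (f (Fin.cons true x) - f (Fin.cons false x)) ^ 2) +
      (DD (fun x => f (Fin.cons true x)) + DD (fun x => f (Fin.cons false x))) / 2 := by
  unfold DD
  rw [Fin.sum_univ_succ, ← Finset.sum_add_distrib, Finset.sum_div]
  congr 1
  · rw [EE_succ]
    simp only [flp_zero, Bool.not_true, Bool.not_false]
    have : (fun x : Fin n → Bool => (f (Fin.cons false x) - f (Fin.cons true x)) ^ 2) =
      (fun x => (f (Fin.cons true x) - f (Fin.cons false x)) ^ 2) := by funext x; ring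
    rw [this]; ring
  · refine Finset.sum_congr rfl fun i _ => ?_
    rw [EE_succ]; simp only [flp_succ]

lemma poinc1 {n : ℕ} (f : (Fin n → Bool) → ℝ) :
    EE (fun x => f x ^ 2) - (EE f) ^ 2 ≤ DD f / 4 := by
  induction n with
  | zero => simp [EE, DD]
  | succ n ih =>
    rw [DD_succ, EE_succ, EE_succ f]
    have h1 := ih (fun x => f (Fin.cons true x))
    have h2 := ih (fun x => f (Fin.cons false x))
    have h3 := EE_jensen (fun x => f (Fin.cons true x) - f (Fin.cons false x))
    rw [EE_sub] at h3
    nlinarith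

lemma DD_par {n : ℕ} (f g : (Fin n → Bool) → ℝ) :
    DD f + DD g = 2 * (DD (fun x => (1/2) * (f x + g x)) + DD (fun x => (1/2) * (f x - g x))) := by
  unfold DD
  rw [← Finset.sum_add_distrib, ← Finset.sum_add_distrib, Finset.mul_sum]
  refine Finset.sum_congr rfl fun i _ => ?_
  rw [← EE_add, ← EE_add, ← EE_mul]
  congr 1; funext x; ring

lemma poinc2 {n : ℕ} (f : (Fin n → Bool) → ℝ) :
    2 * (EE (fun x => f x ^ 2) - (EE f) ^ 2) - ∑ i, (EE (fun x => sg (x i) * f x)) ^ 2 ≤ DD f / 4 := by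
  induction n with
  | zero => simp [EE, DD]
  | succ n ih =>
    rw [DD_succ, EE_succ, EE_succ f, DD_par, Fin.sum_univ_succ]
    have h1 := ih (fun x => (1/2) * (f (Fin.cons true x) + f (Fin.cons false x)))
    have h2 := poinc1 (fun x => (1/2) * (f (Fin.cons true x) - f (Fin.cons false x)))
    have e1 : ∀ i : Fin n, EE (fun x => sg (x i.succ) * f x) =
        EE (fun x => sg (x i) * ((1/2) * (f (Fin.cons true x) + f (Fin.cons false x)))) := by
      intro i
      rw [EE_succ, ← EE_add]
      simp only [Fin.cons_succ]
      rw [div_eq_inv_mul, ← EE_mul]; congr 1; funext x; ring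
    have e2 : EE (fun x => sg (x 0) * f x) =
        EE (fun x => (1/2) * (f (Fin.cons true x) - f (Fin.cons false x))) := by
      rw [EE_succ, ← EE_add]
      simp only [Fin.cons_zero, sg]
      rw [div_eq_inv_mul, ← EE_mul]; congr 1; funext x; simp; ring
    simp only [e1, e2]
    have e3 : EE (fun x => ((1/2) * (f (Fin.cons true x) + f (Fin.cons false x)))^2) =
      (EE (fun x => f (Fin.cons true x) ^ 2) + EE (fun x => f (Fin.cons false x) ^ 2)) / 2
       - EE (fun x => (f (Fin.cons true x) - f (Fin.cons false x)) ^ 2) / 4 := by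
      rw [← EE_add, div_eq_inv_mul (EE _), div_eq_inv_mul (EE _), ← EE_mul, ← EE_mul, ← EE_sub]
      congr 1; funext x; ring
    have e4 : EE (fun x => ((1/2) * (f (Fin.cons true x) - f (Fin.cons false x)))^2) =
       EE (fun x => (f (Fin.cons true x) - f (Fin.cons false x)) ^ 2) / 4 := by
      rw [div_eq_inv_mul (EE _), ← EE_mul]
      congr 1; funext x; ring
    rw [e3] at h1
    rw [e4] at h2
    rw [EE_mul, EE_add] at h1
    linarith

lemma EE_comp {n : ℕ} (e : (Fin n → Bool) ≃ (Fin n → Bool)) (f : (Fin n → Bool) → ℝ) :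
    EE (fun x => f (e x)) = EE f := by
  unfold EE; rw [e.sum_comp]

lemma flp_flp {n : ℕ} (i : Fin n) (x : Fin n → Bool) : flp i (flp i x) = x := by
  simp [flp]

/-- Flip as an equivalence. -/
def flpE {n : ℕ} (i : Fin n) : (Fin n → Bool) ≃ (Fin n → Bool) :=
  ⟨flp i, flp i, flp_flp i, flp_flp i⟩

lemma neg_neg_cube {n : ℕ} (x : Fin n → Bool) : (fun i => !(!(x i))) = x := by simp

/-- Global negation. -/
def negE (n : ℕ) : (Fin n → Bool) ≃ (Fin n → Bool) :=
  ⟨fun x i => !(x i), fun x i => !(x i), neg_neg_cube, neg_neg_cube⟩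

lemma sg_not (b : Bool) : sg (!b) = - sg b := by cases b <;> simp [sg]

lemma kahane {V : Type*} [NormedAddCommGroup V] [NormedSpace ℝ V] {n : ℕ} (v : Fin n → V) :
    EE (fun x => ‖∑ i, sg (x i) • v i‖ ^ 2) ≤ 2 * (EE (fun x => ‖∑ i, sg (x i) • v i‖)) ^ 2 := by
  set f : (Fin n → Bool) → ℝ := fun x => ‖∑ i, sg (x i) • v i‖ with hf
  have hodd : ∀ i, EE (fun x => sg (x i) * f x) = 0 := by
    intro i
    have h := EE_comp (negE n) (fun x => sg (x i) * f x)
    have h' : (fun x => sg ((negE n x) i) * f (negE n x)) = fun x => (-1) * (sg (x i) * f x) := by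
      funext x
      have : f (negE n x) = f x := by
        simp [hf, negE, sg_not]
      rw [this]; simp [negE, sg_not]
    rw [h', EE_mul] at h
    linarith
  have hP := poinc2 f
  simp only [hodd] at hP
  have hL : ∀ x, ∑ i, (f x - f (flp i x)) ≤ 2 * f x := by
    intro x
    have hs : ∀ i, ∑ j, sg (flp i x j) • v j = ∑ j, sg (x j) • v j - (2:ℝ) • (sg (x i) • v i) := by
      intro i
      rw [eq_sub_iff_add_eq, ← sub_eq_zero, add_sub_right_comm, ← Finset.sum_sub_distrib,
        Finset.sum_eq_single i]
      · simp [flp, sg_not]; rw [two_smul]; abel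
      · intro j _ hj; simp [flp, hj]
      · simp
    have h1 : ‖∑ i, (∑ j, sg (flp i x j) • v j)‖ ≤ ∑ i, f (flp i x) := norm_sum_le _ _
    simp only [hs, Finset.sum_sub_distrib, ← Finset.smul_sum] at h1
    rw [Finset.sum_sub_distrib]
    simp only [Finset.sum_const, Finset.card_univ, Fintype.card_fin, ← Nat.cast_smul_eq_nsmul ℝ] at h1 ⊢
    have h2 := norm_sub_norm_le ((n:ℝ) • ∑ j, sg (x j) • v j) ((2:ℝ) • ∑ j, sg (x j) • v j)
    rw [norm_smul, norm_smul] at h2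
    simp only [Real.norm_natCast, Real.norm_ofNat] at h2
    have : f x = ‖∑ j, sg (x j) • v j‖ := rfl
    rw [smul_eq_mul, this]
    linarith
  have hD : DD f ≤ 4 * EE (fun x => f x ^ 2) := by
    have : DD f = EE (fun x => 2 * (f x * ∑ i, (f x - f (flp i x)))) := by
      have h0 : (fun x => 2 * (f x * ∑ i, (f x - f (flp i x)))) =
        fun x => ∑ i, 2 * (f x * (f x - f (flp i x))) := by
        funext x; rw [Finset.mul_sum, Finset.mul_sum]
      rw [h0, EE_sum]
      refine Finset.sum_congr rfl fun i _ => ?_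
      have hc := EE_comp (flpE i) (fun x => f x ^ 2)
      have : (fun x => (f x - f (flp i x)) ^ 2) =
        fun x => 2 * (f x * (f x - f (flp i x))) + (f (flpE i x) ^ 2 - f x ^ 2) := by
        funext x; change _ = 2 * (f x * (f x - f (flp i x))) + (f (flp i x) ^ 2 - f x ^ 2); ring
      rw [this, EE_add, EE_sub, hc]; ring
    rw [this, ← EE_mul]
    refine EE_mono _ _ fun x => ?_
    have h0 : 0 ≤ f x := norm_nonneg _
    nlinarith [mul_le_mul_of_nonneg_left (hL x) h0]
  simp at hP
  linarith

lemma EE_sq {V : Type*} [NormedAddCommGroup V] [InnerProductSpace ℝ V] {n : ℕ} (v : Fin n → V) (u : V) :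
    EE (fun x => ‖u + ∑ i, sg (x i) • v i‖ ^ 2) = ‖u‖ ^ 2 + ∑ i, ‖v i‖ ^ 2 := by
  induction n generalizing u with
  | zero => simp [EE]
  | succ n ih =>
    rw [EE_succ]
    simp only [Fin.sum_univ_succ, Fin.cons_zero, Fin.cons_succ, ← add_assoc]
    rw [ih (fun i => v i.succ) (u + sg true • v 0), ih (fun i => v i.succ) (u + sg false • v 0)]
    have := parallelogram_law_with_norm ℝ u (v 0)
    simp [sg, ← sub_eq_add_neg]
    nlinarith

lemma khin {V : Type*} [NormedAddCommGroup V] [InnerProductSpace ℝ V] {n : ℕ} (v : Fin n → V) :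
    (1 / √2) * √(∑ i, ‖v i‖ ^ 2) ≤ EE (fun x => ‖∑ i, sg (x i) • v i‖) := by
  have h := kahane v
  have h2 := EE_sq v 0
  simp only [zero_add, norm_zero] at h2
  rw [h2] at h
  have h0 : 0 ≤ EE (fun x => ‖∑ i, sg (x i) • v i‖) := by
    rw [← EE_const (n := n) 0]; exact EE_mono _ _ fun x => norm_nonneg _
  rw [one_div, ← Real.sqrt_inv, ← Real.sqrt_mul (by positivity)]
  apply Real.sqrt_le_iff.2 ⟨h0, _⟩
  norm_num at h; linarith

/-- Hilbert-Schmidt norm of the coefficients. -/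
def HS {𝕂 : Type*} [RCLike 𝕂] {m n : ℕ} (B : MultilinearMap 𝕂 (fun _ : Fin m => Fin n → 𝕂) 𝕂) : ℝ :=
  √(∑ j : Fin m → Fin n, ‖B (fun k => Pi.single (j k) 1)‖ ^ 2)

/-- Sign vector. -/
def sv (𝕂 : Type*) [RCLike 𝕂] {n : ℕ} (x : Fin n → Bool) : Fin n → 𝕂 := fun i => ((sg (x i) : ℝ) : 𝕂)

lemma cons_single {𝕂 : Type*} [RCLike 𝕂] {m n : ℕ} (i : Fin n) (j : Fin m → Fin n) :
    (fun k => Pi.single ((Fin.cons i j : Fin (m+1) → Fin n) k) (1:𝕂) : Fin (m+1) → Fin n → 𝕂) =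
      Fin.cons (Pi.single i 1) (fun k => Pi.single (j k) 1) := by
  funext k
  refine Fin.cases ?_ (fun k => ?_) k <;> simp

lemma sum_tuple_succ {m n : ℕ} (f : (Fin (m+1) → Fin n) → ℝ) :
    ∑ j, f j = ∑ i, ∑ j : Fin m → Fin n, f (Fin.cons i j) := by
  rw [← (Fin.consEquiv (fun _ : Fin (m+1) => Fin n)).sum_comp, Fintype.sum_prod_type]
  simp [Fin.consEquiv]

lemma curry_expand {𝕂 : Type*} [RCLike 𝕂] {m n : ℕ}
    (B : MultilinearMap 𝕂 (fun _ : Fin (m+1) => Fin n → 𝕂) 𝕂) (x : Fin n → 𝕂) (y : Fin m → Fin n → 𝕂) :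
    B (Fin.cons x y) = ∑ i, x i * B (Fin.cons (Pi.single i 1) y) := by
  have h : B.curryLeft x = ∑ i, x i • B.curryLeft (Pi.single i 1) := by
    conv_lhs => rw [pi_eq_sum_univ' x, map_sum]
    refine Finset.sum_congr rfl fun i _ => ?_
    rw [map_smul]
  have := congrArg (fun M => M y) h
  simpa [sum_apply] using this

lemma HS_step {𝕂 : Type*} [RCLike 𝕂] {m n : ℕ}
    (B : MultilinearMap 𝕂 (fun _ : Fin (m+1) => Fin n → 𝕂) 𝕂) :
    (1 / √2) * HS B ≤ EE (fun x : Fin n → Bool => HS (B.curryLeft (sv 𝕂 x))) := by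
  let _ : InnerProductSpace ℝ (EuclideanSpace 𝕂 (Fin m → Fin n)) := InnerProductSpace.rclikeToReal 𝕂 _
  let v : Fin n → EuclideanSpace 𝕂 (Fin m → Fin n) := fun i =>
    WithLp.toLp 2 fun j => B (Fin.cons (Pi.single i 1) (fun k => Pi.single (j k) 1))
  have h := khin v
  have e1 : √(∑ i, ‖v i‖ ^ 2) = HS B := by
    unfold HS
    rw [sum_tuple_succ]
    simp only [cons_single, EuclideanSpace.norm_sq_eq, v]
  rw [e1] at h
  refine h.trans_eq (congrArg EE (funext fun x => ?_))
  unfold HS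
  rw [EuclideanSpace.norm_eq]
  congr 1
  refine Finset.sum_congr rfl fun j _ => ?_
  congr 2
  rw [MultilinearMap.curryLeft_apply, curry_expand]
  simp only [WithLp.ofLp_sum, Finset.sum_apply]
  refine Finset.sum_congr rfl fun i _ => ?_
  rfl

lemma EE_exists {n : ℕ} (f : (Fin n → Bool) → ℝ) (c : ℝ) (h : c ≤ EE f) : ∃ x, c ≤ f x := by
  by_contra! hc
  unfold EE at h
  rw [le_div_iff₀ (by positivity)] at h
  have : ∑ x, f x < ∑ x : Fin n → Bool, c := Finset.sum_lt_sum_of_nonempty Finset.univ_nonempty (fun x _ => hc x)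
  simp at this
  linarith

lemma exists_signs {𝕂 : Type*} [RCLike 𝕂] {ι : Type*} [Fintype ι] {m n : ℕ}
    (B : ι → MultilinearMap 𝕂 (fun _ : Fin m => Fin n → 𝕂) 𝕂) :
    ∃ x : Fin m → Fin n → Bool, (1 / √2) ^ m * ∑ i, HS (B i) ≤ ∑ i, ‖B i (fun k => sv 𝕂 (x k))‖ := by
  induction m with
  | zero =>
    refine ⟨fun k => k.elim0, ?_⟩
    rw [pow_zero, one_mul]
    refine Finset.sum_le_sum fun i _ => ?_
    simp only [HS, Fintype.sum_unique, Real.sqrt_sq (norm_nonneg _)]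
    exact le_of_eq (congrArg (fun z => ‖B i z‖) (Subsingleton.elim _ _))
  | succ m ih =>
    obtain ⟨x, hx⟩ := EE_exists (fun x : Fin n → Bool => ∑ i, HS ((B i).curryLeft (sv 𝕂 x)))
      ((1 / √2) * ∑ i, HS (B i)) (by
        rw [EE_sum, Finset.mul_sum]
        exact Finset.sum_le_sum fun i _ => HS_step (B i))
    obtain ⟨y, hy⟩ := ih (fun i => (B i).curryLeft (sv 𝕂 x))
    refine ⟨Fin.cons x y, ?_⟩
    have e : (fun k => sv 𝕂 ((Fin.cons x y : Fin (m+1) → Fin n → Bool) k)) =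
        Fin.cons (sv 𝕂 x) (fun k => sv 𝕂 (y k)) := by
      funext k
      refine Fin.cases ?_ (fun k => ?_) k <;> simp
    rw [e]
    simp only [MultilinearMap.curryLeft_apply] at hy
    refine le_trans ?_ hy
    rw [pow_succ, mul_assoc]
    gcongr

lemma sup_case {𝕂 : Type*} [RCLike 𝕂] {m n : ℕ}
    (A : MultilinearMap 𝕂 (fun _ : Fin (m+1) => Fin n → 𝕂) 𝕂)
    (hA : Unimodular (n := fun _ => n) A) :
    ∃ z : Fin (m+1) → Fin n → 𝕂, (∀ k i, ‖z k i‖ ≤ 1) ∧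
      (1 / √2) ^ m * (n * √(n ^ m)) ≤ ‖A z‖ := by
  obtain ⟨x, hx⟩ := exists_signs (fun i : Fin n => A.curryLeft (Pi.single i 1))
  have hHS : ∀ i, HS (A.curryLeft (Pi.single i 1)) = √(n ^ m) := by
    intro i
    unfold HS
    simp only [MultilinearMap.curryLeft_apply, ← cons_single]
    have : ∀ j : Fin m → Fin n, ‖A (fun k => Pi.single ((Fin.cons i j : Fin (m+1) → Fin n) k) 1)‖ = 1 :=
      fun j => hA _
    simp [this]
  simp only [hHS, MultilinearMap.curryLeft_apply] at hx
  set a : Fin n → 𝕂 := fun i => A (Fin.cons (Pi.single i 1) (fun k => sv 𝕂 (x k))) with ha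
  refine ⟨Fin.cons (fun i => (starRingEnd 𝕂) (a i) / (‖a i‖ : 𝕂)) (fun k => sv 𝕂 (x k)), ?_, ?_⟩
  · intro k i
    refine Fin.cases ?_ (fun k => ?_) k
    · simp only [Fin.cons_zero, norm_div, RCLike.norm_conj, RCLike.norm_ofReal, abs_norm]
      exact div_self_le_one _
    · simp only [Fin.cons_succ, sv, RCLike.norm_ofReal]
      cases x k i <;> simp [sg]
  · rw [curry_expand]
    have : ∀ i, (starRingEnd 𝕂) (a i) / (‖a i‖ : 𝕂) * a i = ((‖a i‖ : ℝ) : 𝕂) := by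
      intro i
      rw [div_mul_eq_mul_div, RCLike.conj_mul]
      by_cases h : ((‖a i‖ : ℝ) : 𝕂) = 0
      · simp [h]
      · field_simp
    change _ ≤ ‖∑ i, (starRingEnd 𝕂) (a i) / (‖a i‖ : 𝕂) * a i‖
    simp only [this]
    rw [← RCLike.ofReal_sum, RCLike.norm_ofReal]
    refine le_trans ?_ (le_abs_self _)
    simpa using hx

lemma lp_scale {𝕂 : Type*} [RCLike 𝕂] {n : ℕ} (hn : 0 < n) (p : ℝ≥0∞) (hp : 2 ≤ p) (z : Fin n → 𝕂)
    (hz : ∀ i, ‖z i‖ ≤ 1) :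
    lpNorm p ((((n:ℝ) ^ (-(1/p).toReal) : ℝ) : 𝕂) • z) ≤ 1 := by
  have : Nonempty (Fin n) := ⟨⟨0, hn⟩⟩
  unfold lpNorm
  split_ifs with h
  · subst h
    refine ciSup_le fun i => ?_
    simpa using hz i
  · have hp0 : 0 < p.toReal := ENNReal.toReal_pos (by rintro rfl; simp at hp) h
    have hn' : (0:ℝ) < n := by exact_mod_cast hn
    have : ∀ i, ‖((((n:ℝ) ^ (-(1/p).toReal) : ℝ) : 𝕂) • z) i‖ ^ p.toReal ≤ (n:ℝ)⁻¹ := by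
      intro i
      rw [Pi.smul_apply, norm_smul, RCLike.norm_ofReal, abs_of_pos (by positivity)]
      calc _ ≤ ((n:ℝ) ^ (-(1/p).toReal)) ^ p.toReal := by
            gcongr
            exact mul_le_of_le_one_right (by positivity) (hz i)
        _ = (n:ℝ)⁻¹ := by
            rw [← Real.rpow_mul hn'.le, ← Real.rpow_neg_one]
            congr 1
            rw [one_div, ENNReal.toReal_inv]
            field_simp
    apply Real.rpow_le_one (by positivity) _ (by positivity)
    refine (Finset.sum_le_sum fun i _ => this i).trans ?_
    simp [hn'.ne']

lemma lp_entry {𝕂 : Type*} [RCLike 𝕂] {n : ℕ} (p : ℝ≥0∞) (hp : 2 ≤ p) (z : Fin n → 𝕂)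
    (hz : lpNorm p z ≤ 1) (i : Fin n) : ‖z i‖ ≤ 1 := by
  unfold lpNorm at hz
  split_ifs at hz with h
  · exact (le_ciSup (f := fun j => ‖z j‖) (Set.finite_range _).bddAbove i).trans hz
  · have hp0 : 0 < p.toReal := ENNReal.toReal_pos (by rintro rfl; simp at hp) h
    by_contra! hc
    have h1 : 1 < ‖z i‖ ^ p.toReal := Real.one_lt_rpow hc hp0
    have h2 : ‖z i‖ ^ p.toReal ≤ ∑ j, ‖z j‖ ^ p.toReal :=
      Finset.single_le_sum (f := fun j => ‖z j‖ ^ p.toReal) (fun j _ => by positivity) (Finset.mem_univ i)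
    have h3 : 1 < (∑ j, ‖z j‖ ^ p.toReal) ^ (1 / p.toReal) := Real.one_lt_rpow (by linarith) (by positivity)
    linarith

lemma opNorm_bdd {𝕂 : Type*} [RCLike 𝕂] {m n : ℕ} (p : Fin m → ℝ≥0∞) (hp : ∀ k, 2 ≤ p k)
    (A : MultilinearMap 𝕂 (fun _ : Fin m => Fin n → 𝕂) 𝕂) :
    BddAbove {t | ∃ x : ∀ _ : Fin m, Fin n → 𝕂, (∀ k, lpNorm (p k) (x k) ≤ 1) ∧ t = ‖A x‖} := by
  refine ⟨∑ r : Fin m → Fin n, ‖A (fun k => Pi.single (r k) 1)‖, ?_⟩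
  rintro t ⟨x, hx, rfl⟩
  have e : x = fun k => ∑ i, x k i • (Pi.single i (1:𝕂) : Fin n → 𝕂) := by
    funext k i
    simp [Finset.sum_apply, Pi.single_apply]
  rw [e, MultilinearMap.map_sum]
  refine (norm_sum_le _ _).trans (Finset.sum_le_sum fun r _ => ?_)
  rw [MultilinearMap.map_smul_univ, norm_smul, norm_prod]
  refine mul_le_of_le_one_left (norm_nonneg _) ?_
  exact Finset.prod_le_one (fun k _ => norm_nonneg _)
    fun k _ => lp_entry (p k) (hp k) (x k) (hx k) (r k)

/-- **Lower bound from the Hardy–Littlewood inequalities.** For `p_1, …, p_m ∈ [2,∞]`,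
every unimodular `m`-linear form `A : ℓ_{p_1}^n × ⋯ × ℓ_{p_m}^n → 𝕂` satisfies
`‖A‖ ≥ (1/√2)^(m−1) · n ^ (1/2 + (1/2 − 1/p_1) + ⋯ + (1/2 − 1/p_m))`. -/
theorem unimodular_lower_bound_hardy_littlewood {𝕂 : Type*} [RCLike 𝕂]
    (m n : ℕ) (hm : 0 < m) (hn : 0 < n)
    (p : Fin m → ℝ≥0∞) (hp : ∀ k, 2 ≤ p k)
    (A : MultilinearMap 𝕂 (fun _ : Fin m => Fin n → 𝕂) 𝕂)
    (hA : Unimodular (n := fun _ => n) A) :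
    (1 / Real.sqrt 2) ^ (m - 1) *
        (n : ℝ) ^ ((1 : ℝ) / 2 + ∑ k, ((1 : ℝ) / 2 - (1 / p k).toReal)) ≤
      opNorm p A := by
  obtain ⟨m, rfl⟩ : ∃ l, m = l + 1 := ⟨m - 1, by omega⟩
  have hn' : (0:ℝ) < n := by exact_mod_cast hn
  obtain ⟨z, hz, hAz⟩ := sup_case A hA
  have hmem : ‖A (fun k => (((n:ℝ) ^ (-(1/p k).toReal) : ℝ) : 𝕂) • z k)‖ ≤ opNorm p A :=
    le_csSup (opNorm_bdd p hp A) ⟨_, fun k => lp_scale hn (p k) (hp k) (z k) (hz k), rfl⟩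
  refine le_trans ?_ hmem
  rw [MultilinearMap.map_smul_univ, norm_smul, norm_prod]
  have e : ∏ k, ‖(((n:ℝ) ^ (-(1/p k).toReal) : ℝ) : 𝕂)‖ = (n:ℝ) ^ (∑ k, -(1/p k).toReal) := by
    rw [Real.rpow_sum_of_pos hn']
    refine Finset.prod_congr rfl fun k _ => ?_
    rw [RCLike.norm_ofReal, abs_of_pos (by positivity)]
  rw [e]
  have e2 : (n:ℝ) ^ ((1 : ℝ) / 2 + ∑ k, ((1 : ℝ) / 2 - (1 / p k).toReal)) =
      (n:ℝ) ^ (∑ k, -(1/p k).toReal) * (n * √(n ^ m)) := by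
    rw [Real.sqrt_eq_rpow, ← Real.rpow_natCast (n:ℝ) m, ← Real.rpow_mul hn'.le]
    nth_rewrite 3 [← Real.rpow_one (n:ℝ)]
    rw [← Real.rpow_add hn', ← Real.rpow_add hn']
    congr 1
    simp only [sub_eq_add_neg, Finset.sum_add_distrib, Finset.sum_const, Finset.card_univ,
      Fintype.card_fin, nsmul_eq_mul]
    push_cast; ring
  rw [e2, Nat.add_sub_cancel, mul_left_comm]
  gcongr
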